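/- arXiv:1808.04199 — 4 statements merged into one kernel-verified Lean document; each statement's English description precedes it below -/
import Mathlib

section
/- For every n ≥ 3 and every 1 ≤ k ≤ n−1, the number R_{n,k} of permutations of length n with rev-tier n−2 in which the entry 1 occurs in position k+1 equals the Entringer number E_{n−1,k}, i.e., the number of down-up alternating permutations of length n−1 beginning with k. -/
/-!
The proof works with the inverse `π = σ⁻¹`, which lists the positions of the values `0, 1, 2, …`.
At most `n - 2` of the pairs `(a, a+1)` can be separated, since some value above `a + 1` is needed,
so rev-tier `n - 2` says that the pairs with `a = 0, …, n - 3` are all separated with orientations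
down, up, down, … (`revTier_eq_iff`).

Deleting the first entry `p` of `π` and standardizing leaves a permutation `τ` one shorter
(`insHead p τ` is the inverse operation).  With `q` the first entry of `τ`, the pair `(0, 1)` is
down separated iff `q + 1 < p` and up separated iff `p < q`, whereas `π` has a descent at its
start iff `q < p` and an ascent iff `p ≤ q`.  Hence the permutations with a maximal alternating
chain of separated pairs and the alternating permutations one shorter, counted by first entry,
satisfy the same recurrence, once `p` is shifted by one in the case where the first pair is down
oriented (`sepCount_eq_altCount`).
-/

/-!  Common definitions: permutation patterns, separated pairs, rev-tier. -/

/-- `π` contains the pattern `σ`. -/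
def Pattern.Contains {n k : ℕ} (π : Equiv.Perm (Fin n)) (σ : Equiv.Perm (Fin k)) : Prop :=
  ∃ α : Fin k → Fin n, StrictMono α ∧ ∀ i j : Fin k, (π (α i) < π (α j) ↔ σ i < σ j)

/-- `π` avoids the pattern `σ`. -/
def Pattern.Avoids {n k : ℕ} (π : Equiv.Perm (Fin n)) (σ : Equiv.Perm (Fin k)) : Prop :=
  ¬ Pattern.Contains π σ

/-- The pair of values `(a, a+1)` (0-indexed) is an up oriented separated pair in `σ`:
`a` precedes `a+1` and some value `> a+1` occurs strictly between them. -/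
def UpSepPair {n : ℕ} (σ : Equiv.Perm (Fin n)) (a : Fin n) : Prop :=
  ∃ hb : (a : ℕ) + 1 < n,
    σ.symm a < σ.symm ⟨(a : ℕ) + 1, hb⟩ ∧
    ∃ p : Fin n, σ.symm a < p ∧ p < σ.symm ⟨(a : ℕ) + 1, hb⟩ ∧ (a : ℕ) + 1 < (σ p : ℕ)

/-- The pair of values `(a, a+1)` (0-indexed) is a down oriented separated pair in `σ`. -/
def DownSepPair {n : ℕ} (σ : Equiv.Perm (Fin n)) (a : Fin n) : Prop :=
  ∃ hb : (a : ℕ) + 1 < n,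
    σ.symm ⟨(a : ℕ) + 1, hb⟩ < σ.symm a ∧
    ∃ p : Fin n, σ.symm ⟨(a : ℕ) + 1, hb⟩ < p ∧ p < σ.symm a ∧ (a : ℕ) + 1 < (σ p : ℕ)

/-- `(a, a+1)` is a separated pair (of either orientation). -/
def SepPair {n : ℕ} (σ : Equiv.Perm (Fin n)) (a : Fin n) : Prop :=
  UpSepPair σ a ∨ DownSepPair σ a

/-- `σ` has no separated pairs. -/
def NoSepPairs {n : ℕ} (σ : Equiv.Perm (Fin n)) : Prop :=
  ∀ a : Fin n, ¬ SepPair σ a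

/-- `f` lists the lower values of an increasing sequence of separated pairs in `σ` with
alternating orientations; the first pair is down oriented iff `firstDown = true`. -/
def AltChain {n : ℕ} (σ : Equiv.Perm (Fin n)) (firstDown : Bool) {t : ℕ}
    (f : Fin t → Fin n) : Prop :=
  StrictMono f ∧ ∀ j : Fin t,
    if ((j : ℕ) % 2 = 0) ↔ (firstDown = true) then DownSepPair σ (f j)
    else UpSepPair σ (f j)

/-- The rev-tier of `σ`: the maximal length of an increasing sequence of separated pairs
with alternating orientations beginning with a down oriented pair. -/
noncomputable def revTier {n : ℕ} (σ : Equiv.Perm (Fin n)) : ℕ :=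
  sSup {t : ℕ | ∃ f : Fin t → Fin n, AltChain σ true f}

/-- Maximal length of an increasing alternating sequence of separated pairs (either
starting orientation). -/
noncomputable def maxAltLen {n : ℕ} (σ : Equiv.Perm (Fin n)) : ℕ :=
  sSup {t : ℕ | ∃ b : Bool, ∃ f : Fin t → Fin n, AltChain σ b f}

/-- `σ` has a separated pair and every maximum-length increasing alternating sequence of
separated pairs begins with an up oriented pair. -/
def UpOriented {n : ℕ} (σ : Equiv.Perm (Fin n)) : Prop :=
  1 ≤ maxAltLen σ ∧ ¬ ∃ f : Fin (maxAltLen σ) → Fin n, AltChain σ true f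

/-- `σ` has a separated pair and every maximum-length increasing alternating sequence of
separated pairs begins with a down oriented pair. -/
def DownOriented {n : ℕ} (σ : Equiv.Perm (Fin n)) : Prop :=
  1 ≤ maxAltLen σ ∧ ¬ ∃ f : Fin (maxAltLen σ) → Fin n, AltChain σ false f

/-- `σ` is a basis element of the class of permutations of rev-tier at most `t`. -/
def IsBasisElt (t : ℕ) {n : ℕ} (σ : Equiv.Perm (Fin n)) : Prop :=
  t + 1 ≤ revTier σ ∧
  ∀ (m : ℕ) (τ : Equiv.Perm (Fin m)), m < n → Pattern.Contains σ τ → revTier τ ≤ t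

/-- The entry `1` of `σ` is in (1-indexed) position `k`. -/
def onePos {n : ℕ} (σ : Equiv.Perm (Fin n)) (k : ℕ) : Prop :=
  ∀ h : 0 < n, (σ.symm ⟨0, h⟩ : ℕ) + 1 = k

/-- `η(n,k)`: number of permutations of length `n` with no separated pairs and entry `1`
in position `k`. -/
noncomputable def eta (n k : ℕ) : ℕ :=
  Nat.card {σ : Equiv.Perm (Fin n) // NoSepPairs σ ∧ onePos σ k}

/-- `η(n)`: number of permutations of length `n` with no separated pairs. -/
noncomputable def etaTot (n : ℕ) : ℕ :=
  Nat.card {σ : Equiv.Perm (Fin n) // NoSepPairs σ}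

/-- `μ_U(n,t,k)`: number of up-oriented permutations of length `n`, rev-tier `t`, with
entry `1` in position `k`. -/
noncomputable def muU (n t k : ℕ) : ℕ :=
  Nat.card {σ : Equiv.Perm (Fin n) // UpOriented σ ∧ revTier σ = t ∧ onePos σ k}

/-- `μ_D(n,t,k)`: number of down-oriented permutations of length `n`, rev-tier `t`, with
entry `1` in position `k`. -/
noncomputable def muD (n t k : ℕ) : ℕ :=
  Nat.card {σ : Equiv.Perm (Fin n) // DownOriented σ ∧ revTier σ = t ∧ onePos σ k}

/-- `π` is a down-up alternating permutation: `π₁ > π₂ < π₃ > ⋯`. -/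
def DownUp {n : ℕ} (π : Equiv.Perm (Fin n)) : Prop :=
  ∀ (i : ℕ) (h : i + 1 < n),
    if i % 2 = 0 then π ⟨i + 1, h⟩ < π ⟨i, by omega⟩
    else π ⟨i, by omega⟩ < π ⟨i + 1, h⟩

/-- The Entringer number `E_{n,k}`: down-up alternating permutations of length `n` whose
first entry is `k` (1-indexed value). -/
noncomputable def entringer (n k : ℕ) : ℕ :=
  Nat.card {π : Equiv.Perm (Fin n) // DownUp π ∧ ∀ h : 0 < n, (π ⟨0, h⟩ : ℕ) + 1 = k}

/-- The reversal of a permutation: `(revP σ) j = σ (n + 1 - j)`. -/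
def revP {n : ℕ} (σ : Equiv.Perm (Fin n)) : Equiv.Perm (Fin n) :=
  (Fin.revPerm).trans σ

/-- The explicit maximal rev-tier permutation of length `n` (0-indexed values):
the even entries of `{1,…,n}` in decreasing order, then `n`, then the odd entries in
increasing order. -/
def maxPermVal (n : ℕ) (i : Fin n) : Fin n :=
  if h1 : (i : ℕ) < (n - 1) / 2 then
    ⟨2 * ((n - 1) / 2) - 2 * (i : ℕ) - 1, by omega⟩
  else if h2 : (i : ℕ) = (n - 1) / 2 then
    ⟨n - 1, by have := i.isLt; omega⟩
  else
    ⟨2 * ((i : ℕ) - (n - 1) / 2 - 1), by have := i.isLt; omega⟩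

def p231 : Equiv.Perm (Fin 3) :=
  ⟨![1, 2, 0], ![2, 0, 1], by decide, by decide⟩

def p132 : Equiv.Perm (Fin 3) :=
  ⟨![0, 2, 1], ![0, 2, 1], by decide, by decide⟩

def p2413 : Equiv.Perm (Fin 4) :=
  ⟨![1, 3, 0, 2], ![2, 0, 3, 1], by decide, by decide⟩

def p2431 : Equiv.Perm (Fin 4) :=
  ⟨![1, 3, 2, 0], ![3, 0, 2, 1], by decide, by decide⟩

def p23154 : Equiv.Perm (Fin 5) :=
  ⟨![1, 2, 0, 4, 3], ![2, 0, 1, 4, 3], by decide, by decide⟩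

def p24153 : Equiv.Perm (Fin 5) :=
  ⟨![1, 3, 0, 4, 2], ![2, 0, 4, 1, 3], by decide, by decide⟩

def p24513 : Equiv.Perm (Fin 5) :=
  ⟨![1, 3, 4, 0, 2], ![3, 0, 4, 1, 2], by decide, by decide⟩

def p24531 : Equiv.Perm (Fin 5) :=
  ⟨![1, 3, 4, 2, 0], ![4, 0, 3, 1, 2], by decide, by decide⟩

def p42513 : Equiv.Perm (Fin 5) :=
  ⟨![3, 1, 4, 0, 2], ![3, 1, 4, 0, 2], by decide, by decide⟩

def p42531 : Equiv.Perm (Fin 5) :=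
  ⟨![3, 1, 4, 2, 0], ![4, 1, 3, 0, 2], by decide, by decide⟩

def p231564 : Equiv.Perm (Fin 6) :=
  ⟨![1, 2, 0, 4, 5, 3], ![2, 0, 1, 5, 3, 4], by decide, by decide⟩

def p261453 : Equiv.Perm (Fin 6) :=
  ⟨![1, 5, 0, 3, 4, 2], ![2, 0, 5, 3, 4, 1], by decide, by decide⟩

def p523164 : Equiv.Perm (Fin 6) :=
  ⟨![4, 1, 2, 0, 5, 3], ![3, 1, 2, 5, 0, 4], by decide, by decide⟩

def p562413 : Equiv.Perm (Fin 6) :=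
  ⟨![4, 5, 1, 3, 0, 2], ![4, 2, 5, 3, 0, 1], by decide, by decide⟩

def p562431 : Equiv.Perm (Fin 6) :=
  ⟨![4, 5, 1, 3, 2, 0], ![5, 2, 4, 3, 0, 1], by decide, by decide⟩

def p6723154 : Equiv.Perm (Fin 7) :=
  ⟨![5, 6, 1, 2, 0, 4, 3], ![4, 2, 3, 6, 5, 0, 1], by decide, by decide⟩

def p4321 : Equiv.Perm (Fin 4) :=
  ⟨![3, 2, 1, 0], ![3, 2, 1, 0], by decide, by decide⟩

def p4213 : Equiv.Perm (Fin 4) :=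
  ⟨![3, 1, 0, 2], ![2, 1, 3, 0], by decide, by decide⟩

/-! ### Prepending an entry to a permutation -/

/-- The permutation with first entry `p` whose remaining entries are order isomorphic to `τ`. -/
noncomputable def insHead {m : ℕ} (p : Fin (m + 1)) (τ : Equiv.Perm (Fin m)) :
    Equiv.Perm (Fin (m + 1)) :=
  Equiv.ofBijective (Fin.cons p (fun i => p.succAbove (τ i)) : Fin (m + 1) → Fin (m + 1)) <| by
    rw [← Finite.injective_iff_bijective, Fin.cons_injective_iff]
    refine ⟨?_, fun i j h => τ.injective (Fin.succAbove_right_injective h)⟩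
    rintro ⟨i, hi⟩
    exact Fin.succAbove_ne _ _ hi

@[simp] lemma insHead_zero {m : ℕ} (p : Fin (m + 1)) (τ : Equiv.Perm (Fin m)) :
    insHead p τ 0 = p := rfl

@[simp] lemma insHead_succ {m : ℕ} (p : Fin (m + 1)) (τ : Equiv.Perm (Fin m)) (i : Fin m) :
    insHead p τ i.succ = p.succAbove (τ i) := rfl

lemma insHead_bijective (m : ℕ) :
    Function.Bijective
      (fun x : Fin (m + 1) × Equiv.Perm (Fin m) => insHead x.1 x.2) := by
  rw [Fintype.bijective_iff_injective_and_card]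
  constructor
  · rintro ⟨p, τ⟩ ⟨p', τ'⟩ h
    have h' : insHead p τ = insHead p' τ' := h
    have h0 : p = p' := by simpa using congrArg (fun e => e 0) h'
    subst h0
    have : τ = τ' := by
      ext1 i
      have := congrArg (fun e => e i.succ) h'
      simpa using this
    rw [this]
  · simp [Fintype.card_perm, Nat.factorial_succ]

/-- Recurrence for counting by first entry: if membership of `insHead p τ` in `P` amounts to
membership of `τ` in `Q` together with a condition `R` on `τ 0`, then the permutations in `P`
with first entry `p` are counted by summing over the possible values of `τ 0`. -/
lemma card_head_rec {m : ℕ} (P : Equiv.Perm (Fin (m + 2)) → Prop)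
    (Q : Equiv.Perm (Fin (m + 1)) → Prop) (R : ℕ → Prop) [DecidablePred R] (p : Fin (m + 2))
    (h : ∀ τ, P (insHead p τ) ↔ R (τ 0) ∧ Q τ) :
    Nat.card {π : Equiv.Perm (Fin (m + 2)) // P π ∧ (π 0 : ℕ) = p} =
      ∑ q ∈ Finset.range (m + 1), if R q then
        Nat.card {τ : Equiv.Perm (Fin (m + 1)) // Q τ ∧ (τ 0 : ℕ) = q} else 0 := by
  classical
  have e : Nat.card {τ : Equiv.Perm (Fin (m + 1)) // R (τ 0) ∧ Q τ} =
      Nat.card {π : Equiv.Perm (Fin (m + 2)) // P π ∧ (π 0 : ℕ) = p} := by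
    refine Nat.card_congr (Equiv.ofBijective
      (fun τ => ⟨insHead p τ.1, (h _).2 τ.2, by simp⟩) ⟨?_, ?_⟩)
    · rintro ⟨τ, h1⟩ ⟨τ', h2⟩ h3
      have h4 : insHead p τ = insHead p τ' := congrArg Subtype.val h3
      have := @(insHead_bijective (m + 1)).1 (p, τ) (p, τ') h4
      simp only [Prod.mk.injEq, true_and] at this
      exact Subtype.ext this
    · rintro ⟨π, h1, h2⟩
      obtain ⟨⟨p', τ⟩, rfl⟩ := (insHead_bijective (m + 1)).2 π
      have : p' = p := Fin.ext (by simpa using h2)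
      subst this
      exact ⟨⟨τ, (h _).1 h1⟩, rfl⟩
  rw [← e]
  simp only [Nat.card_eq_fintype_card, Fintype.card_subtype]
  rw [Finset.card_eq_sum_card_fiberwise (f := fun τ : Equiv.Perm (Fin (m + 1)) => (τ 0 : ℕ))
    (t := Finset.range (m + 1)) (by
      intro τ _
      simpa using Nat.lt_succ_iff.1 (τ 0).isLt)]
  refine Finset.sum_congr rfl fun q _ => ?_
  rw [Finset.filter_filter]
  split_ifs with hq
  · congr 1
    ext τ
    simp only [Finset.mem_filter, Finset.mem_univ, true_and]
    constructor
    · rintro ⟨⟨_, h2⟩, h3⟩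
      exact ⟨h2, h3⟩
    · rintro ⟨h2, h3⟩
      exact ⟨⟨h3 ▸ hq, h2⟩, h3⟩
  · rw [Finset.card_eq_zero, Finset.filter_eq_empty_iff]
    rintro τ _ ⟨⟨h1, _⟩, h3⟩
    exact hq (h3 ▸ h1)

/-! ### Alternating and separated conditions under prepending -/

/-- `π` is alternating; its first step is a descent iff `b = true`. -/
def AltP (b : Bool) {m : ℕ} (π : Equiv.Perm (Fin m)) : Prop :=
  ∀ (i : ℕ) (h : i + 1 < m),
    if (i % 2 = 0) ↔ b = true then π ⟨i + 1, h⟩ < π ⟨i, by omega⟩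
    else π ⟨i, by omega⟩ < π ⟨i + 1, h⟩

/-- `π` is the inverse of a permutation in which every pair `(i, i+1)` except the topmost one is
separated, with alternating orientations; the pair `(0, 1)` is down oriented iff `b = true`. -/
def SepP (b : Bool) {m : ℕ} (π : Equiv.Perm (Fin m)) : Prop :=
  ∀ (i : ℕ) (h : i + 2 < m),
    if (i % 2 = 0) ↔ b = true then
      ∃ v : Fin m, i + 1 < (v : ℕ) ∧ π ⟨i + 1, by omega⟩ < π v ∧ π v < π ⟨i, by omega⟩
    else ∃ v : Fin m, i + 1 < (v : ℕ) ∧ π ⟨i, by omega⟩ < π v ∧ π v < π ⟨i + 1, by omega⟩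

lemma succAbove_lt_self_iff {m : ℕ} (p : Fin (m + 1)) (q : Fin m) :
    p.succAbove q < p ↔ (q : ℕ) < p := by
  rw [Fin.succAbove_lt_iff_castSucc_lt, Fin.lt_def, Fin.val_castSucc]

lemma self_lt_succAbove_iff {m : ℕ} (p : Fin (m + 1)) (q : Fin m) :
    p < p.succAbove q ↔ (p : ℕ) ≤ q := by
  rw [Fin.lt_succAbove_iff_le_castSucc, Fin.le_def, Fin.val_castSucc]

/-- Shifting the index by one reverses the orientation expected there. -/
lemma parity_succ (i : ℕ) (b : Bool) :
    (((i + 1) % 2 = 0) ↔ b = true) ↔ ((i % 2 = 0) ↔ (!b) = true) := by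
  rcases Nat.mod_two_eq_zero_or_one i with h | h <;> cases b <;> simp <;> omega

lemma altP_insHead {m : ℕ} (b : Bool) (p : Fin (m + 2)) (τ : Equiv.Perm (Fin (m + 1))) :
    AltP b (insHead p τ) ↔
      (if b = true then (τ 0 : ℕ) < p else (p : ℕ) ≤ τ 0) ∧ AltP (!b) τ := by
  have h0 : ∀ h, (⟨0, h⟩ : Fin (m + 2)) = 0 := fun _ => rfl
  have hs : ∀ i h, (⟨i + 1, h⟩ : Fin (m + 2)) =
      Fin.succ (⟨i, by omega⟩ : Fin (m + 1)) := fun _ _ => rfl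
  constructor
  · intro H
    constructor
    · have := H 0 (by omega)
      rw [hs, h0, insHead_zero, insHead_succ, succAbove_lt_self_iff, self_lt_succAbove_iff] at this
      simpa using this
    · intro i hi
      have := H (i + 1) (by omega)
      simp only [parity_succ] at this
      rw [hs, hs, insHead_succ, insHead_succ, Fin.succAbove_lt_succAbove_iff,
        Fin.succAbove_lt_succAbove_iff] at this
      exact this
  · rintro ⟨H0, H⟩ i hi
    cases i with
    | zero =>
      rw [hs, h0, insHead_zero, insHead_succ, succAbove_lt_self_iff, self_lt_succAbove_iff]
      simpa using H0
    | succ i =>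
      have := H i (by omega)
      simp only [parity_succ]
      rw [hs, hs, insHead_succ, insHead_succ, Fin.succAbove_lt_succAbove_iff,
        Fin.succAbove_lt_succAbove_iff]
      exact this

/-- Some later entry lies strictly between the second entry and the first entry `p` of
`insHead p τ` iff these two are neither in ascending order nor adjacent as numbers, which in
terms of `τ 0` means `τ 0 + 1 < p`. -/
lemma exists_down {m : ℕ} (p : Fin (m + 2)) (τ : Equiv.Perm (Fin (m + 1))) :
    (∃ v : Fin (m + 2), 0 + 1 < (v : ℕ) ∧ p.succAbove (τ 0) < insHead p τ v ∧ insHead p τ v < p) ↔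
      (τ 0 : ℕ) + 1 < p := by
  constructor
  · rintro ⟨v, h1, h2, h3⟩
    obtain ⟨v, rfl⟩ := Fin.exists_succ_eq.2 (show v ≠ 0 by rintro rfl; simp at h1)
    rw [insHead_succ, Fin.succAbove_lt_succAbove_iff, Fin.lt_def] at h2
    rw [insHead_succ, succAbove_lt_self_iff] at h3
    omega
  · intro h
    have hp := p.isLt
    refine ⟨(τ.symm ⟨τ 0 + 1, by omega⟩).succ, ?_, ?_, ?_⟩
    · have : τ.symm ⟨τ 0 + 1, by omega⟩ ≠ 0 := by
        intro h0
        rw [Equiv.symm_apply_eq, Fin.ext_iff] at h0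
        simp at h0
      have := Fin.pos_iff_ne_zero.2 this
      rw [Fin.lt_def] at this
      simp only [Fin.val_succ]
      simp only [Fin.val_zero] at this
      omega
    · rw [insHead_succ, Fin.succAbove_lt_succAbove_iff, Equiv.apply_symm_apply, Fin.lt_def]
      simp
    · rw [insHead_succ, succAbove_lt_self_iff, Equiv.apply_symm_apply]
      exact h

/-- Counterpart of `exists_down` for a first entry `p` smaller than the second one; there `τ 0` is
raised by one when `p` is inserted, so that non-adjacency means `p < τ 0`. -/
lemma exists_up {m : ℕ} (p : Fin (m + 2)) (τ : Equiv.Perm (Fin (m + 1))) :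
    (∃ v : Fin (m + 2), 0 + 1 < (v : ℕ) ∧ p < insHead p τ v ∧ insHead p τ v < p.succAbove (τ 0)) ↔
      (p : ℕ) < τ 0 := by
  constructor
  · rintro ⟨v, h1, h2, h3⟩
    obtain ⟨v, rfl⟩ := Fin.exists_succ_eq.2 (show v ≠ 0 by rintro rfl; simp at h1)
    rw [insHead_succ, Fin.succAbove_lt_succAbove_iff, Fin.lt_def] at h3
    rw [insHead_succ, self_lt_succAbove_iff] at h2
    omega
  · intro h
    have hp := (τ 0).isLt
    refine ⟨(τ.symm ⟨p, by omega⟩).succ, ?_, ?_, ?_⟩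
    · have : τ.symm ⟨p, by omega⟩ ≠ 0 := by
        intro h0
        rw [Equiv.symm_apply_eq, Fin.ext_iff] at h0
        simp at h0
        omega
      have := Fin.pos_iff_ne_zero.2 this
      rw [Fin.lt_def] at this
      simp only [Fin.val_succ]
      simp only [Fin.val_zero] at this
      omega
    · rw [insHead_succ, self_lt_succAbove_iff, Equiv.apply_symm_apply]
    · rw [insHead_succ, Fin.succAbove_lt_succAbove_iff, Equiv.apply_symm_apply, Fin.lt_def]
      exact h

lemma exists_insHead_succ {m : ℕ} (p : Fin (m + 1)) (τ : Equiv.Perm (Fin m)) (i : ℕ)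
    (x y : Fin m) :
    (∃ v : Fin (m + 1), i + 1 + 1 < (v : ℕ) ∧ p.succAbove x < insHead p τ v ∧
      insHead p τ v < p.succAbove y) ↔ ∃ v : Fin m, i + 1 < (v : ℕ) ∧ x < τ v ∧ τ v < y := by
  simp [Fin.exists_fin_succ]

lemma sepP_insHead {m : ℕ} (b : Bool) (p : Fin (m + 3)) (τ : Equiv.Perm (Fin (m + 2))) :
    SepP b (insHead p τ) ↔
      (if b = true then (τ 0 : ℕ) + 1 < p else (p : ℕ) < τ 0) ∧ SepP (!b) τ := by
  have h0 : ∀ h, (⟨0, h⟩ : Fin (m + 3)) = 0 := fun _ => rfl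
  have hs : ∀ i h, (⟨i + 1, h⟩ : Fin (m + 3)) =
      Fin.succ (⟨i, by omega⟩ : Fin (m + 2)) := fun _ _ => rfl
  have key0 : ∀ h1 : 0 + 1 < m + 3, ∀ h2 : 0 < m + 3,
      (if (0 % 2 = 0) ↔ b = true then
        ∃ v : Fin (m + 3), 0 + 1 < (v : ℕ) ∧ insHead p τ ⟨0 + 1, h1⟩ < insHead p τ v ∧
          insHead p τ v < insHead p τ ⟨0, h2⟩
      else ∃ v : Fin (m + 3), 0 + 1 < (v : ℕ) ∧ insHead p τ ⟨0, h2⟩ < insHead p τ v ∧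
          insHead p τ v < insHead p τ ⟨0 + 1, h1⟩) ↔
        (if b = true then (τ 0 : ℕ) + 1 < p else (p : ℕ) < τ 0) := by
    intro h1 h2
    have e1 := exists_down p τ
    have e2 := exists_up p τ
    rw [hs, h0, insHead_zero, insHead_succ]
    cases b
    · simpa using e2
    · simpa using e1
  constructor
  · intro H
    refine ⟨(key0 _ _).1 (H 0 (by omega)), fun i hi => ?_⟩
    have := H (i + 1) (by omega)
    simp only [parity_succ] at this
    rw [hs (i + 1), hs i, insHead_succ, insHead_succ, exists_insHead_succ,
      exists_insHead_succ] at this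
    exact this
  · rintro ⟨H0, H⟩ i hi
    cases i with
    | zero => exact (key0 _ _).2 H0
    | succ i =>
      have := H i (by omega)
      simp only [parity_succ]
      rw [hs (i + 1), hs i, insHead_succ, insHead_succ, exists_insHead_succ,
        exists_insHead_succ]
      exact this

/-! ### Comparison of the two recurrences -/

/-- The number of alternating permutations of length `m + 1` with first entry `p` (0-indexed). -/
noncomputable def altCount (m : ℕ) (b : Bool) (p : ℕ) : ℕ :=
  Nat.card {π : Equiv.Perm (Fin (m + 1)) // AltP b π ∧ (π 0 : ℕ) = p}

/-- The number of permutations of length `m + 1` satisfying `SepP` with first entry `p`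
(0-indexed). -/
noncomputable def sepCount (m : ℕ) (b : Bool) (p : ℕ) : ℕ :=
  Nat.card {π : Equiv.Perm (Fin (m + 1)) // SepP b π ∧ (π 0 : ℕ) = p}

lemma altCount_succ (m : ℕ) (b : Bool) (p : ℕ) (hp : p < m + 2) :
    altCount (m + 1) b p = ∑ q ∈ Finset.range (m + 1),
      if (if b = true then q < p else p ≤ q) then altCount m (!b) q else 0 :=
  card_head_rec (AltP b) (AltP (!b)) (fun q => if b = true then q < p else p ≤ q) ⟨p, hp⟩
    (fun τ => altP_insHead b ⟨p, hp⟩ τ)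

lemma sepCount_succ (m : ℕ) (b : Bool) (p : ℕ) (hp : p < m + 3) :
    sepCount (m + 2) b p = ∑ q ∈ Finset.range (m + 2),
      if (if b = true then q + 1 < p else p < q) then sepCount (m + 1) (!b) q else 0 :=
  card_head_rec (SepP b) (SepP (!b)) (fun q => if b = true then q + 1 < p else p < q) ⟨p, hp⟩
    (fun τ => sepP_insHead b ⟨p, hp⟩ τ)

lemma altCount_zero (b : Bool) : altCount 0 b 0 = 1 := by
  have : ∀ π : Equiv.Perm (Fin 1), (AltP b π ∧ (π 0 : ℕ) = 0) ↔ True := by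
    intro π
    refine iff_true_intro ⟨fun i hi => by omega, by omega⟩
  simp only [altCount, Nat.reduceAdd, this]
  simp

lemma sepCount_one (b : Bool) (p : ℕ) (hp : p < 2) : sepCount 1 b p = 1 := by
  have : ∀ π : Equiv.Perm (Fin 2), (SepP b π ∧ (π 0 : ℕ) = p) ↔ (π 0 : ℕ) = p := by
    intro π
    exact and_iff_right (fun i hi => by omega)
  simp only [sepCount, Nat.reduceAdd, this, Nat.card_eq_fintype_card]
  interval_cases p <;> decide

/-- The two recurrences coincide after shifting the first entry by one in the down case. -/
lemma sepCount_eq_altCount (m : ℕ) : ∀ p, p < m + 1 →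
    sepCount (m + 1) true (p + 1) = altCount m true p ∧
    sepCount (m + 1) false p = altCount m false p := by
  induction m with
  | zero =>
    intro p hp
    obtain rfl : p = 0 := by omega
    simp [altCount_zero, sepCount_one]
  | succ m ih =>
    intro p hp
    rw [sepCount_succ m true (p + 1) (by omega), sepCount_succ m false p (by omega),
      altCount_succ m true p hp, altCount_succ m false p hp]
    constructor
    -- The top index `q = m + 1` contributes nothing, as `p ≤ m + 1`.
    · rw [Finset.sum_range_succ]
      simp only [if_true, Bool.not_true, Nat.add_lt_add_iff_right]
      rw [if_neg (by omega), add_zero]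
      refine Finset.sum_congr rfl fun q hq => ?_
      rw [(ih q (Finset.mem_range.1 hq)).2]
    -- The bottom index `q = 0` contributes nothing; the others are shifted by one.
    · rw [Finset.sum_range_succ']
      simp only [Bool.false_eq_true, if_false, Bool.not_false, not_lt_zero, add_zero,
        Nat.lt_succ_iff]
      refine Finset.sum_congr rfl fun q hq => ?_
      rw [(ih q (Finset.mem_range.1 hq)).1]

/-! ### Maximal rev-tier in terms of the inverse permutation -/

lemma UpSepPair.lt {n : ℕ} {σ : Equiv.Perm (Fin n)} {a : Fin n} (h : UpSepPair σ a) :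
    (a : ℕ) + 2 < n := by
  obtain ⟨_, _, p, _, _, h⟩ := h
  have := (σ p).isLt
  omega

lemma DownSepPair.lt {n : ℕ} {σ : Equiv.Perm (Fin n)} {a : Fin n} (h : DownSepPair σ a) :
    (a : ℕ) + 2 < n := by
  obtain ⟨_, _, p, _, _, h⟩ := h
  have := (σ p).isLt
  omega

lemma AltChain.lt {n t : ℕ} {σ : Equiv.Perm (Fin n)} {b : Bool} {f : Fin t → Fin n}
    (h : AltChain σ b f) (j : Fin t) : (f j : ℕ) + 2 < n := by
  have := h.2 j
  split_ifs at this
  · exact this.lt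
  · exact this.lt

lemma downSepPair_iff {n : ℕ} (σ : Equiv.Perm (Fin n)) (i : ℕ) (h : i + 2 < n) :
    DownSepPair σ ⟨i, by omega⟩ ↔ ∃ v : Fin n, i + 1 < (v : ℕ) ∧
      σ.symm ⟨i + 1, by omega⟩ < σ.symm v ∧ σ.symm v < σ.symm ⟨i, by omega⟩ := by
  constructor
  · rintro ⟨_, _, p, h1, h2, h3⟩
    exact ⟨σ p, h3, by simpa using h1, by simpa using h2⟩
  · rintro ⟨v, h1, h2, h3⟩
    exact ⟨by simp only; omega, h2.trans h3, σ.symm v, h2, h3, by simpa using h1⟩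

lemma upSepPair_iff {n : ℕ} (σ : Equiv.Perm (Fin n)) (i : ℕ) (h : i + 2 < n) :
    UpSepPair σ ⟨i, by omega⟩ ↔ ∃ v : Fin n, i + 1 < (v : ℕ) ∧
      σ.symm ⟨i, by omega⟩ < σ.symm v ∧ σ.symm v < σ.symm ⟨i + 1, by omega⟩ := by
  constructor
  · rintro ⟨_, _, p, h1, h2, h3⟩
    exact ⟨σ p, h3, by simpa using h1, by simpa using h2⟩
  · rintro ⟨v, h1, h2, h3⟩
    exact ⟨by simp only; omega, h2.trans h3, σ.symm v, h2, h3, by simpa using h1⟩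

/-- A chain of length `n - 2` must use the pairs `(0, 1), (1, 2), …, (n - 3, n - 2)`. -/
lemma revTier_eq_iff {n : ℕ} (σ : Equiv.Perm (Fin n)) :
    revTier σ = n - 2 ↔ SepP true σ.symm := by
  set S := {t : ℕ | ∃ f : Fin t → Fin n, AltChain σ true f} with hS
  have hb : ∀ t ∈ S, t ≤ n - 2 := by
    rintro t ⟨f, hf⟩
    have hinj : Function.Injective
        (fun j : Fin t => (⟨f j, by have := hf.lt j; omega⟩ : Fin (n - 2))) := by
      intro i j hij
      exact hf.1.injective (Fin.ext (by simpa using hij))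
    simpa using Fintype.card_le_of_injective _ hinj
  have hne : S.Nonempty := ⟨0, Fin.elim0, fun i => i.elim0, fun i => i.elim0⟩
  have hbd : BddAbove S := ⟨n - 2, hb⟩
  have h1 : revTier σ = n - 2 ↔ n - 2 ∈ S := by
    constructor
    · intro h
      rw [← h]
      exact Nat.sSup_mem hne hbd
    · intro h
      exact le_antisymm (csSup_le hne hb) (le_csSup hbd h)
  rw [h1]
  constructor
  · rintro ⟨f, hf⟩ i hi
    let g : Fin (n - 2) → Fin (n - 2) := fun j => ⟨f j, by have := hf.lt j; omega⟩
    have hg : StrictMono g := fun i j hij => hf.1 hij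
    have hgid : g = id := by
      refine (hg.range_inj strictMono_id).1 ?_
      rw [(Finite.injective_iff_surjective.1 hg.injective).range_eq, Set.range_id]
    have hfi : f ⟨i, by omega⟩ = ⟨i, by omega⟩ := by
      have := congrFun hgid ⟨i, by omega⟩
      rw [Fin.ext_iff] at this
      exact Fin.ext this
    have := hf.2 ⟨i, by omega⟩
    rw [hfi, downSepPair_iff σ i hi, upSepPair_iff σ i hi] at this
    exact this
  · intro H
    refine ⟨fun j => ⟨j, by omega⟩, fun i j hij => hij, fun j => ?_⟩
    have hj : (j : ℕ) + 2 < n := by omega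
    rw [downSepPair_iff σ j hj, upSepPair_iff σ j hj]
    exact H j hj

/-- for `n ≥ 3` and `1 ≤ k ≤ n-1`, the number of permutations of length
`n` with rev-tier `n-2` whose entry `1` is in position `k+1` equals the Entringer number
`E_{n-1,k}`. -/
theorem maximal_revTier_entringer (n k : ℕ) (hn : 3 ≤ n) (hk : 1 ≤ k) (hkn : k ≤ n - 1) :
    Nat.card {σ : Equiv.Perm (Fin n) // revTier σ = n - 2 ∧ onePos σ (k + 1)}
      = entringer (n - 1) k := by
  obtain ⟨m, rfl⟩ : ∃ m, n = m + 2 := ⟨n - 2, by omega⟩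
  obtain ⟨p, rfl⟩ : ∃ p, k = p + 1 := ⟨k - 1, by omega⟩
  have hL : Nat.card {σ : Equiv.Perm (Fin (m + 2)) //
      revTier σ = m + 2 - 2 ∧ onePos σ (p + 1 + 1)} = sepCount (m + 1) true (p + 1) := by
    refine Nat.card_congr ((Equiv.inv (Equiv.Perm (Fin (m + 2)))).subtypeEquiv fun σ => ?_)
    rw [revTier_eq_iff]
    refine and_congr Iff.rfl ?_
    have h0 : (⟨0, by omega⟩ : Fin (m + 2)) = 0 := rfl
    simp only [onePos, h0, Nat.add_right_cancel_iff, Nat.zero_lt_succ, forall_true_left]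
    rfl
  have hR : entringer (m + 2 - 1) (p + 1) = altCount m true p := by
    refine Nat.card_congr ((Equiv.refl (Equiv.Perm (Fin (m + 1)))).subtypeEquiv fun π => ?_)
    refine and_congr ?_ ?_
    · simp [DownUp, AltP]
    · have h0 : (⟨0, by omega⟩ : Fin (m + 1)) = 0 := rfl
      simp [h0]
  rw [hL, hR]
  exact (sepCount_eq_altCount m p (by omega)).1
end

section
/- For all n ≥ 1, if a permutation π of length n has its entry 1 in position n or position n−1 and π has at least one separated pair, then the smallest separated pair of π is down oriented; consequently no up-oriented permutation of length n has its entry 1 in position n or n−1 (μ_U(n,t,n) = μ_U(n,t,n−1) = 0 for all t). Similarly, if the entry 1 is in position 1 or 2 and π has a separated pair, its smallest separated pair is up oriented, so μ_D(n,t,1) = μ_D(n,t,2) = 0 for all t. -/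
/-- If no pair `(b, b + 1)` with `b < a` is a down oriented separated pair and at most one position
comes after that of the smallest value, then at most one entry larger than `a` comes after `a`.
Positions form an arbitrary linear order so that reversal is an instance with `OrderDual`. -/
theorem few_larger_after {α : Type*} [LinearOrder α] {n : ℕ} (e : α ≃ Fin n) (h : 0 < n)
    (h0 : ∀ p q, e.symm ⟨0, h⟩ < p → p < q → False) (a : ℕ)
    (hns : ∀ (b : ℕ) (hb : b + 1 < n), b < a → ∀ p, e.symm ⟨b + 1, hb⟩ < p →
      p < e.symm ⟨b, by omega⟩ → b + 1 < (e p : ℕ) → False) (ha : a < n) :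
    ∀ p q, e.symm ⟨a, ha⟩ < p → p < q → a < (e p : ℕ) → a < (e q : ℕ) → False := by
  induction a with
  | zero => exact fun p q hp hpq _ _ => h0 p q hp hpq
  | succ b ih =>
    intro p q hp hpq hbp hbq
    have hP : p ≤ e.symm ⟨b, by omega⟩ := by
      by_contra! hlt
      exact ih (fun c hc hcb => hns c hc (by omega)) (by omega) p q hlt hpq (by omega) (by omega)
    rcases hP.lt_or_eq with hlt | heq
    · exact hns b ha (by omega) p hp hlt hbp
    · rw [heq] at hbp
      simp at hbp

theorem down_of_smallest {n : ℕ} (σ : Equiv.Perm (Fin n)) (h : 0 < n)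
    (hpos : n - 1 ≤ (σ.symm ⟨0, h⟩ : ℕ) + 1) (a : Fin n) (ha : SepPair σ a)
    (hmin : ∀ b : Fin n, b < a → ¬ SepPair σ b) : DownSepPair σ a := by
  rcases ha with ⟨hb, _, p, hp, hpq, hval⟩ | hd
  · exfalso
    refine few_larger_after σ h ?_ a ?_ a.isLt p (σ.symm ⟨a + 1, hb⟩) hp hpq (by omega) (by simp)
    · intro p q hp hpq
      have := q.isLt
      simp only [Fin.lt_def] at hp hpq
      omega
    · intro b hb hba p h1 h2 h3
      exact hmin ⟨b, by omega⟩ hba (Or.inr ⟨hb, h1.trans h2, p, h1, h2, h3⟩)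
  · exact hd

theorem up_of_smallest {n : ℕ} (σ : Equiv.Perm (Fin n)) (h : 0 < n)
    (hpos : (σ.symm ⟨0, h⟩ : ℕ) + 1 ≤ 2) (a : Fin n) (ha : SepPair σ a)
    (hmin : ∀ b : Fin n, b < a → ¬ SepPair σ b) : UpSepPair σ a := by
  rcases ha with hu | ⟨hb, _, p, hq, hp, hval⟩
  · exact hu
  · exfalso
    refine few_larger_after (α := (Fin n)ᵒᵈ) (OrderDual.ofDual.trans σ) h ?_ a ?_ a.isLt
      (OrderDual.toDual p) (OrderDual.toDual (σ.symm ⟨a + 1, hb⟩)) hp hq ?_ ?_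
    · intro p q hp hpq
      have h1 : OrderDual.ofDual p < σ.symm ⟨0, h⟩ := hp
      have h2 : OrderDual.ofDual q < OrderDual.ofDual p := hpq
      simp only [Fin.lt_def] at h1 h2
      omega
    · intro b hb hba p h1 h2 h3
      have h1' : OrderDual.ofDual p < σ.symm ⟨b + 1, hb⟩ := h1
      have h2' : σ.symm ⟨b, by omega⟩ < OrderDual.ofDual p := h2
      exact hmin ⟨b, by omega⟩ hba (Or.inl ⟨hb, h2'.trans h1', OrderDual.ofDual p, h2', h1', h3⟩)
    · simp
      omega
    · simp

theorem not_up_and_down {n : ℕ} {σ : Equiv.Perm (Fin n)} {a : Fin n}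
    (hu : UpSepPair σ a) (hd : DownSepPair σ a) : False := by
  obtain ⟨_, h1, _⟩ := hu
  obtain ⟨_, h2, _⟩ := hd
  exact lt_asymm h1 h2

/-- If the smallest separated pair has orientation `c` (down for `true`), then some alternating
sequence of maximum length starts with orientation `c`. -/
theorem exists_altChain_of_smallest {n : ℕ} (σ : Equiv.Perm (Fin n)) (c : Bool)
    (hc : ∀ a : Fin n, SepPair σ a → (∀ b : Fin n, b < a → ¬ SepPair σ b) →
      if c = true then DownSepPair σ a else UpSepPair σ a)
    (hm : 1 ≤ maxAltLen σ) : ∃ f : Fin (maxAltLen σ) → Fin n, AltChain σ c f := by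
  have hbdd : BddAbove {t : ℕ | ∃ b : Bool, ∃ f : Fin t → Fin n, AltChain σ b f} := by
    refine ⟨n, ?_⟩
    rintro t ⟨b, f, hf, _⟩
    simpa using Fintype.card_le_of_injective f hf.injective
  have hne : {t : ℕ | ∃ b : Bool, ∃ f : Fin t → Fin n, AltChain σ b f}.Nonempty :=
    ⟨0, true, Fin.elim0, fun i => i.elim0, fun i => i.elim0⟩
  obtain ⟨b, f, hf⟩ : ∃ b : Bool, ∃ f : Fin (maxAltLen σ) → Fin n, AltChain σ b f :=
    Nat.sSup_mem hne hbdd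
  have hmax : ∀ t (b : Bool) (g : Fin t → Fin n), AltChain σ b g → t ≤ maxAltLen σ :=
    fun t b g hg => le_csSup hbdd ⟨b, g, hg⟩
  generalize maxAltLen σ = m at *
  by_cases hbc : b = c
  · exact ⟨f, hbc ▸ hf⟩
  exfalso
  obtain ⟨k, rfl⟩ : ∃ k, m = k + 1 := ⟨m - 1, by omega⟩
  obtain ⟨hmono, hor⟩ := hf
  have hf0 := hor 0
  have hs0 : SepPair σ (f 0) := by
    split_ifs at hf0
    exacts [Or.inr hf0, Or.inl hf0]
  obtain ⟨a, ha, hamin⟩ := WellFounded.has_min (wellFounded_lt (α := Fin n))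
    {a | SepPair σ a} ⟨f 0, hs0⟩
  have hca := hc a ha (fun b hb hs => hamin b hs hb)
  have hlt : a < f 0 := by
    refine lt_of_le_of_ne (not_lt.mp (hamin (f 0) hs0)) ?_
    rintro rfl
    cases b <;> cases c <;> simp at hbc hf0 hca
    · exact not_up_and_down hf0 hca
    · exact not_up_and_down hca hf0
  have hlong : AltChain σ c (Fin.cons a f : Fin (k + 1 + 1) → Fin n) := by
    constructor
    · rw [Fin.strictMono_iff_lt_succ]
      intro i
      refine Fin.cases ?_ (fun j => ?_) i
      · simpa using hlt
      · rw [Fin.cons_succ, ← Fin.succ_castSucc, Fin.cons_succ]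
        exact hmono j.castSucc_lt_succ
    · intro j
      refine Fin.cases ?_ (fun j => ?_) j
      · simpa using hca
      · have hj := hor j
        rw [Fin.cons_succ]
        -- Shifting the index by one flips its parity, which matches `b ≠ c`.
        have hpar : (((j.succ : Fin (k + 1 + 1)) : ℕ) % 2 = 0 ↔ c = true) ↔
            ((j : ℕ) % 2 = 0 ↔ b = true) := by
          rw [Fin.val_succ]
          cases b <;> cases c <;> simp at hbc ⊢ <;> omega
        simpa only [hpar] using hj
  have := hmax _ _ _ hlong
  omega

theorem muU_eq_zero {n k : ℕ} (hn : 0 < n) (t : ℕ) (hk : n - 1 ≤ k) : muU n t k = 0 := by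
  refine Nat.card_eq_zero.mpr (Or.inl ⟨?_⟩)
  rintro ⟨σ, ⟨hm, hno⟩, _, hpos⟩
  have := hpos hn
  refine hno (exists_altChain_of_smallest σ true (fun a ha hmin => ?_) hm)
  simpa using down_of_smallest σ hn (by omega) a ha hmin

theorem muD_eq_zero {n k : ℕ} (hn : 0 < n) (t : ℕ) (hk : k ≤ 2) : muD n t k = 0 := by
  refine Nat.card_eq_zero.mpr (Or.inl ⟨?_⟩)
  rintro ⟨σ, ⟨hm, hno⟩, _, hpos⟩
  have := hpos hn
  refine hno (exists_altChain_of_smallest σ false (fun a ha hmin => ?_) hm)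
  simpa using up_of_smallest σ hn (by omega) a ha hmin

/-- if the entry `1` of a permutation of length `n` is in position `n` or
`n-1` then its smallest separated pair (if any) is down oriented, so
`μ_U(n,t,n) = μ_U(n,t,n-1) = 0`; symmetrically if `1` is in position `1` or `2` the
smallest separated pair is up oriented, so `μ_D(n,t,1) = μ_D(n,t,2) = 0`. -/
theorem one_position_constraints (n : ℕ) (hn : 1 ≤ n) :
    (∀ (σ : Equiv.Perm (Fin n)) (h : 0 < n),
      ((σ.symm ⟨0, h⟩ : ℕ) + 1 = n ∨ (σ.symm ⟨0, h⟩ : ℕ) + 1 = n - 1) →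
      ∀ a : Fin n, SepPair σ a → (∀ b : Fin n, b < a → ¬ SepPair σ b) →
      DownSepPair σ a) ∧
    (∀ t : ℕ, muU n t n = 0 ∧ muU n t (n - 1) = 0) ∧
    (∀ (σ : Equiv.Perm (Fin n)) (h : 0 < n),
      ((σ.symm ⟨0, h⟩ : ℕ) + 1 = 1 ∨ (σ.symm ⟨0, h⟩ : ℕ) + 1 = 2) →
      ∀ a : Fin n, SepPair σ a → (∀ b : Fin n, b < a → ¬ SepPair σ b) →
      UpSepPair σ a) ∧
    (∀ t : ℕ, muD n t 1 = 0 ∧ muD n t 2 = 0) := by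
  exact ⟨fun σ h hpos => down_of_smallest σ h (by omega),
    fun t => ⟨muU_eq_zero hn t (by omega), muU_eq_zero hn t le_rfl⟩,
    fun σ h hpos => up_of_smallest σ h (by omega),
    fun t => ⟨muD_eq_zero hn t (by omega), muD_eq_zero hn t le_rfl⟩⟩
end

section
/- Let π be a permutation of length n and let π^rev denote its reversal (π^rev_j = π_{n+1−j}). Then (i,i+1) is an up oriented separated pair in π if and only if (i,i+1) is a down oriented separated pair in π^rev. Consequently, the reversal map restricts to a bijection from the set of permutations of length n with no separated pairs and 1 in position k onto the same set with 1 in position n−k+1, and, for every t ≥ 0, to a bijection from the set of up-oriented permutations of length n with rev-tier t and 1 in position k onto the set of down-oriented permutations of length n with rev-tier t+1 and 1 in position n−k+1. -/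
theorem revP_revP {n : ℕ} (σ : Equiv.Perm (Fin n)) : revP (revP σ) = σ := by
  ext i
  simp [revP]

theorem revP_symm_apply {n : ℕ} (σ : Equiv.Perm (Fin n)) (a : Fin n) :
    (revP σ).symm a = Fin.rev (σ.symm a) := by
  simp [revP]

theorem upSepPair_iff_revP {n : ℕ} (σ : Equiv.Perm (Fin n)) (a : Fin n) :
    UpSepPair σ a ↔ DownSepPair (revP σ) a := by
  unfold UpSepPair DownSepPair
  refine exists_congr fun hb => ?_
  simp only [revP_symm_apply, Fin.rev_lt_rev]
  refine and_congr_right fun _ => ?_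
  -- the witness position `p` of `σ` corresponds to `Fin.rev p` in `revP σ`
  rw [← Fin.revPerm.exists_congr_right]
  refine exists_congr fun p => ?_
  simp only [revP, Equiv.trans_apply, Fin.revPerm_apply, Fin.rev_lt_iff, Fin.lt_rev_iff]
  tauto

theorem downSepPair_iff_revP {n : ℕ} (σ : Equiv.Perm (Fin n)) (a : Fin n) :
    DownSepPair σ a ↔ UpSepPair (revP σ) a := by
  rw [upSepPair_iff_revP, revP_revP]

theorem noSepPairs_revP {n : ℕ} (σ : Equiv.Perm (Fin n)) :
    NoSepPairs (revP σ) ↔ NoSepPairs σ := by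
  simp only [NoSepPairs, SepPair, ← upSepPair_iff_revP, ← downSepPair_iff_revP, or_comm]

theorem onePos_revP {n k : ℕ} (hkn : k ≤ n) (σ : Equiv.Perm (Fin n)) :
    onePos (revP σ) (n - k + 1) ↔ onePos σ k := by
  unfold onePos
  refine forall_congr' fun h => ?_
  rw [revP_symm_apply, Fin.val_rev]
  have := (σ.symm ⟨0, h⟩).isLt
  omega

theorem altChain_revP {n t : ℕ} (σ : Equiv.Perm (Fin n)) (b : Bool) (f : Fin t → Fin n) :
    AltChain (revP σ) b f ↔ AltChain σ (!b) f := by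
  unfold AltChain
  refine and_congr_right fun _ => forall_congr' fun j => ?_
  rw [← upSepPair_iff_revP, ← downSepPair_iff_revP]
  by_cases hj : (j : ℕ) % 2 = 0 <;> cases b <;> simp [hj]

theorem maxAltLen_revP {n : ℕ} (σ : Equiv.Perm (Fin n)) : maxAltLen (revP σ) = maxAltLen σ := by
  unfold maxAltLen
  congr 1
  ext t
  simp only [Set.mem_ofPred_eq, altChain_revP, Bool.exists_bool, Bool.not_false, Bool.not_true,
    or_comm]

theorem downOriented_revP {n : ℕ} (σ : Equiv.Perm (Fin n)) :
    DownOriented (revP σ) ↔ UpOriented σ := by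
  unfold DownOriented UpOriented
  rw [maxAltLen_revP]
  simp only [altChain_revP, Bool.not_false]

theorem AltChain.length_le {n t : ℕ} {σ : Equiv.Perm (Fin n)} {b : Bool} {f : Fin t → Fin n}
    (h : AltChain σ b f) : t ≤ n := by
  simpa using Fintype.card_le_of_injective f h.1.injective

theorem AltChain.le_maxAltLen {n t : ℕ} {σ : Equiv.Perm (Fin n)} {b : Bool} {f : Fin t → Fin n}
    (h : AltChain σ b f) : t ≤ maxAltLen σ :=
  le_csSup ⟨n, by rintro _ ⟨_, _, h⟩; exact h.length_le⟩ ⟨b, f, h⟩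

theorem AltChain.le_revTier {n t : ℕ} {σ : Equiv.Perm (Fin n)} {f : Fin t → Fin n}
    (h : AltChain σ true f) : t ≤ revTier σ :=
  le_csSup ⟨n, by rintro _ ⟨_, h⟩; exact h.length_le⟩ ⟨f, h⟩

theorem altChain_zero {n : ℕ} (σ : Equiv.Perm (Fin n)) (b : Bool) (f : Fin 0 → Fin n) :
    AltChain σ b f :=
  ⟨fun i => i.elim0, fun i => i.elim0⟩

theorem exists_altChain_maxAltLen {n : ℕ} (σ : Equiv.Perm (Fin n)) :
    ∃ b : Bool, ∃ f : Fin (maxAltLen σ) → Fin n, AltChain σ b f :=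
  Nat.sSup_mem (s := {t : ℕ | ∃ b : Bool, ∃ f : Fin t → Fin n, AltChain σ b f})
    ⟨0, true, Fin.elim0, altChain_zero σ true _⟩ ⟨n, by rintro _ ⟨_, _, h⟩; exact h.length_le⟩

theorem exists_altChain_revTier {n : ℕ} (σ : Equiv.Perm (Fin n)) :
    ∃ f : Fin (revTier σ) → Fin n, AltChain σ true f :=
  Nat.sSup_mem (s := {t : ℕ | ∃ f : Fin t → Fin n, AltChain σ true f})
    ⟨0, Fin.elim0, altChain_zero σ true _⟩ ⟨n, by rintro _ ⟨_, h⟩; exact h.length_le⟩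

theorem revTier_le_maxAltLen {n : ℕ} (σ : Equiv.Perm (Fin n)) : revTier σ ≤ maxAltLen σ := by
  obtain ⟨f, hf⟩ := exists_altChain_revTier σ
  exact hf.le_maxAltLen

/-- Dropping the first pair of an alternating chain flips its starting orientation. -/
theorem AltChain.tail {n t : ℕ} {σ : Equiv.Perm (Fin n)} {b : Bool} {f : Fin (t + 1) → Fin n}
    (h : AltChain σ b f) : AltChain σ (!b) (fun j : Fin t => f j.succ) := by
  refine ⟨fun i j hij => h.1 (Fin.succ_lt_succ_iff.mpr hij), fun j => ?_⟩
  have hj := h.2 j.succ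
  rw [Fin.val_succ] at hj
  rcases Nat.mod_two_eq_zero_or_one (j : ℕ) with h0 | h0 <;> cases b <;>
    simpa [Nat.add_mod, h0] using hj

theorem DownOriented.revTier_eq {n : ℕ} {σ : Equiv.Perm (Fin n)} (h : DownOriented σ) :
    revTier σ = maxAltLen σ := by
  refine le_antisymm (revTier_le_maxAltLen σ) ?_
  obtain ⟨b, f, hf⟩ := exists_altChain_maxAltLen σ
  cases b
  · exact absurd ⟨f, hf⟩ h.2
  · exact hf.le_revTier

theorem UpOriented.revTier_add_one {n : ℕ} {σ : Equiv.Perm (Fin n)} (h : UpOriented σ) :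
    revTier σ + 1 = maxAltLen σ := by
  obtain ⟨hpos, hno⟩ := h
  have hne : revTier σ ≠ maxAltLen σ := fun he => hno (he ▸ exists_altChain_revTier σ)
  have hle := revTier_le_maxAltLen σ
  obtain ⟨b, f, hf⟩ := exists_altChain_maxAltLen σ
  cases b
  · obtain ⟨m, hm⟩ : ∃ m, maxAltLen σ = m + 1 := ⟨maxAltLen σ - 1, by omega⟩
    have hex : ∃ f : Fin (maxAltLen σ) → Fin n, AltChain σ false f := ⟨f, hf⟩
    rw [hm] at hex
    obtain ⟨g, hg⟩ := hex
    have := hg.tail.le_revTier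
    omega
  · exact absurd ⟨f, hf⟩ hno

theorem upOriented_revTier_iff {n : ℕ} (σ : Equiv.Perm (Fin n)) (t : ℕ) :
    (DownOriented (revP σ) ∧ revTier (revP σ) = t + 1) ↔ (UpOriented σ ∧ revTier σ = t) := by
  rw [downOriented_revP]
  refine and_congr_right fun h => ?_
  have h1 := ((downOriented_revP σ).mpr h).revTier_eq
  rw [maxAltLen_revP, ← h.revTier_add_one] at h1
  omega

/-- As `revP` is an involution, it restricts to a bijection from `S` onto `T` as soon as `S` is the
preimage of `T`. -/
theorem bijOn_revP {n : ℕ} {S T : Set (Equiv.Perm (Fin n))} (h : ∀ σ, revP σ ∈ T ↔ σ ∈ S) :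
    Set.BijOn (fun σ : Equiv.Perm (Fin n) => revP σ) S T := by
  refine Set.InvOn.bijOn (f' := revP) ⟨fun σ _ => revP_revP σ, fun σ _ => revP_revP σ⟩
    (fun σ hσ => (h σ).mpr hσ) (fun σ hσ => (h (revP σ)).mp ?_)
  rwa [revP_revP]

/-- reversal turns up oriented separated pairs into down oriented ones,
and induces the stated bijections. -/
theorem reversal_bijections (n : ℕ) :
    (∀ (σ : Equiv.Perm (Fin n)) (a : Fin n), UpSepPair σ a ↔ DownSepPair (revP σ) a) ∧
    (∀ k : ℕ, 1 ≤ k → k ≤ n →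
      Set.BijOn (fun σ : Equiv.Perm (Fin n) => revP σ)
        {σ | NoSepPairs σ ∧ onePos σ k}
        {σ | NoSepPairs σ ∧ onePos σ (n - k + 1)}) ∧
    (∀ (t k : ℕ), 1 ≤ k → k ≤ n →
      Set.BijOn (fun σ : Equiv.Perm (Fin n) => revP σ)
        {σ | UpOriented σ ∧ revTier σ = t ∧ onePos σ k}
        {σ | DownOriented σ ∧ revTier σ = t + 1 ∧ onePos σ (n - k + 1)}) := by
  refine ⟨upSepPair_iff_revP, fun k _ hkn => bijOn_revP fun σ => ?_,
    fun t k _ hkn => bijOn_revP fun σ => ?_⟩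
  · simp only [Set.mem_ofPred_eq, noSepPairs_revP, onePos_revP hkn]
  · simp only [Set.mem_ofPred_eq, onePos_revP hkn, ← and_assoc, upOriented_revTier_iff]
end

section
/- For every t ≥ 1 and every n, the number μ_U(n, t, n−2) of up-oriented permutations of length n with rev-tier t and entry 1 in position n−2 equals the number of permutations of length at most n−1 with rev-tier t whose entry 1 is in the final position; that is, μ_U(n, t, n−2) = Σ_{m=1}^{n−1} μ_D(m, t, m). -/
namespace RevTierAux

open Equiv

/-! ### Chains of separated pairs -/

/-- `a` is the lower value of a separated pair of orientation `d` (`true` for down). -/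
def Kind {n : ℕ} (σ : Perm (Fin n)) (d : Bool) (a : Fin n) : Prop :=
  if d = true then DownSepPair σ a else UpSepPair σ a

lemma altChain_iff {n t : ℕ} (σ : Perm (Fin n)) (b : Bool) (f : Fin t → Fin n) :
    AltChain σ b f ↔
      StrictMono f ∧ ∀ j : Fin t, Kind σ (if (j : ℕ) % 2 = 0 then b else !b) (f j) := by
  unfold AltChain Kind
  refine and_congr_right fun _ => forall_congr' fun j => ?_
  cases b <;> by_cases h : (j : ℕ) % 2 = 0 <;> simp [h]

lemma Kind.not_other {n : ℕ} {σ : Perm (Fin n)} {d : Bool} {a : Fin n} (h : Kind σ d a) :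
    ¬ Kind σ (!d) a := by
  cases d
  · rintro ⟨_, h2, _⟩
    obtain ⟨_, h1, _⟩ := h
    exact lt_asymm h1 h2
  · rintro ⟨_, h2, _⟩
    obtain ⟨_, h1, _⟩ := h
    exact lt_asymm h1 h2

/-- `σ` has an alternating chain of length `t` whose first pair has orientation `b`. -/
def HasChain {n : ℕ} (σ : Perm (Fin n)) (b : Bool) (t : ℕ) : Prop :=
  ∃ f : Fin t → Fin n, AltChain σ b f

/-- The greatest length of an alternating chain whose first pair has orientation `b`. -/
noncomputable def altLen {n : ℕ} (b : Bool) (σ : Perm (Fin n)) : ℕ :=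
  sSup {t : ℕ | HasChain σ b t}

lemma HasChain.le {n : ℕ} {σ : Perm (Fin n)} {b : Bool} {t : ℕ} (h : HasChain σ b t) :
    t ≤ n := by
  obtain ⟨f, hf, _⟩ := h
  simpa using Fintype.card_le_of_injective f hf.injective

lemma hasChain_zero {n : ℕ} (σ : Perm (Fin n)) (b : Bool) : HasChain σ b 0 :=
  ⟨Fin.elim0, fun i => i.elim0, fun i => i.elim0⟩

lemma HasChain.mono {n : ℕ} {σ : Perm (Fin n)} {b : Bool} {s t : ℕ} (h : HasChain σ b t)
    (hst : s ≤ t) : HasChain σ b s := by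
  obtain ⟨f, hf, hk⟩ := h
  exact ⟨fun i => f (Fin.castLE hst i), fun i j hij => hf (by simpa using hij),
    fun j => hk (Fin.castLE hst j)⟩

lemma bddAbove_hasChain {n : ℕ} (σ : Perm (Fin n)) (b : Bool) :
    BddAbove {t : ℕ | HasChain σ b t} := ⟨n, fun _ h => HasChain.le h⟩

lemma le_altLen_iff {n : ℕ} {σ : Perm (Fin n)} {b : Bool} {t : ℕ} :
    t ≤ altLen b σ ↔ HasChain σ b t :=
  ⟨fun h => HasChain.mono
      (Nat.sSup_mem ⟨0, hasChain_zero σ b⟩ (bddAbove_hasChain σ b)) h,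
    fun h => le_csSup (bddAbove_hasChain σ b) h⟩

lemma maxAltLen_eq {n : ℕ} (σ : Perm (Fin n)) :
    maxAltLen σ = max (altLen true σ) (altLen false σ) := by
  have hb : BddAbove {t : ℕ | ∃ b : Bool, ∃ f : Fin t → Fin n, AltChain σ b f} :=
    ⟨n, fun _ ⟨_, h⟩ => HasChain.le h⟩
  apply le_antisymm
  · refine csSup_le ⟨0, true, hasChain_zero σ true⟩ ?_
    rintro t ⟨b, h⟩
    have := le_altLen_iff.2 h
    cases b
    · exact le_max_of_le_right this
    · exact le_max_of_le_left this
  · exact max_le (le_csSup hb ⟨true, le_altLen_iff.1 le_rfl⟩)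
      (le_csSup hb ⟨false, le_altLen_iff.1 le_rfl⟩)

lemma upOriented_iff {n : ℕ} (σ : Perm (Fin n)) :
    UpOriented σ ↔ altLen true σ < altLen false σ := by
  have h : (∃ f : Fin (maxAltLen σ) → Fin n, AltChain σ true f) ↔
      maxAltLen σ ≤ altLen true σ := le_altLen_iff.symm
  unfold UpOriented
  rw [h, maxAltLen_eq]
  omega

lemma downOriented_iff {n : ℕ} (σ : Perm (Fin n)) :
    DownOriented σ ↔ altLen false σ < altLen true σ := by
  have h : (∃ f : Fin (maxAltLen σ) → Fin n, AltChain σ false f) ↔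
      maxAltLen σ ≤ altLen false σ := le_altLen_iff.symm
  unfold DownOriented
  rw [h, maxAltLen_eq]
  omega

lemma revTier_eq {n : ℕ} (σ : Perm (Fin n)) : revTier σ = altLen true σ := rfl

/-! ### Inserting a new minimum -/

/-- The permutation obtained from `τ` by raising all values by one and inserting the value `0`
at position `p`. -/
def insMin {N : ℕ} (p : Fin (N + 1)) (τ : Perm (Fin N)) : Perm (Fin (N + 1)) :=
  (finSuccEquiv' p).trans ((optionCongr τ).trans (finSuccEquiv' 0).symm)

@[simp] lemma insMin_succAbove {N : ℕ} (p : Fin (N + 1)) (τ : Perm (Fin N)) (i : Fin N) :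
    insMin p τ (p.succAbove i) = (τ i).succ := by
  simp [insMin]

@[simp] lemma insMin_self {N : ℕ} (p : Fin (N + 1)) (τ : Perm (Fin N)) :
    insMin p τ p = 0 := by
  simp [insMin]

@[simp] lemma insMin_symm_succ {N : ℕ} (p : Fin (N + 1)) (τ : Perm (Fin N)) (a : Fin N) :
    (insMin p τ).symm a.succ = p.succAbove (τ.symm a) := by
  rw [symm_apply_eq]; simp

@[simp] lemma insMin_symm_zero {N : ℕ} (p : Fin (N + 1)) (τ : Perm (Fin N)) :
    (insMin p τ).symm 0 = p := by
  rw [symm_apply_eq]; simp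

lemma insMin_injective {N : ℕ} (p : Fin (N + 1)) :
    Function.Injective (insMin p : Perm (Fin N) → _) := by
  intro τ τ' h
  ext i : 1
  have := congrArg (fun σ => σ (p.succAbove i)) h
  simpa using this

lemma exists_insMin {N : ℕ} (σ : Perm (Fin (N + 1))) :
    ∃ τ, insMin (σ.symm 0) τ = σ := by
  have h : Function.Injective (insMin : Fin (N + 1) → Perm (Fin N) → _).uncurry := by
    rintro ⟨p, τ⟩ ⟨p', τ'⟩ h
    have h' : insMin p τ = insMin p' τ' := h
    have hp : p = p' := by rw [← insMin_symm_zero p τ, h', insMin_symm_zero]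
    subst hp
    rw [insMin_injective p h']
  have hs := (Fintype.bijective_iff_injective_and_card _).2 ⟨h, by
    simp [Fintype.card_perm, Nat.factorial_succ]⟩
  obtain ⟨⟨p, τ⟩, h⟩ := hs.2 σ
  have h' : insMin p τ = σ := h
  exact ⟨τ, by rw [← h', insMin_symm_zero]⟩

lemma exists_between_insMin {N : ℕ} (p : Fin (N + 1)) (τ : Perm (Fin N)) (i j : Fin N) (a : ℕ) :
    (∃ q, p.succAbove i < q ∧ q < p.succAbove j ∧ a + 1 + 1 < (insMin p τ q : ℕ)) ↔
      ∃ q, i < q ∧ q < j ∧ a + 1 < (τ q : ℕ) := by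
  constructor
  · rintro ⟨q, h1, h2, h3⟩
    rcases Fin.eq_self_or_eq_succAbove p q with rfl | ⟨q, rfl⟩
    · simp at h3
    · rw [Fin.succAbove_lt_succAbove_iff] at h1 h2
      simp at h3
      exact ⟨q, h1, h2, h3⟩
  · rintro ⟨q, h1, h2, h3⟩
    exact ⟨p.succAbove q, by simpa using h1, by simpa using h2, by simpa using h3⟩

lemma kind_insMin_succ {N : ℕ} (p : Fin (N + 1)) (τ : Perm (Fin N)) (d : Bool) (a : Fin N) :
    Kind (insMin p τ) d a.succ ↔ Kind τ d a := by
  have key : ∀ hb : (a : ℕ) + 1 < N, ∀ hb' : (a.succ : ℕ) + 1 < N + 1,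
      (insMin p τ).symm ⟨(a.succ : ℕ) + 1, hb'⟩ = p.succAbove (τ.symm ⟨(a : ℕ) + 1, hb⟩) :=
    fun hb _ => insMin_symm_succ p τ ⟨(a : ℕ) + 1, hb⟩
  unfold Kind UpSepPair DownSepPair
  split_ifs
  all_goals
    constructor
    · rintro ⟨hb', h1, h2⟩
      have hb : (a : ℕ) + 1 < N := by simpa using hb'
      rw [key hb, insMin_symm_succ] at h1 h2
      exact ⟨hb, by simpa using h1, (exists_between_insMin ..).1 h2⟩
    · rintro ⟨hb, h1, h2⟩
      refine ⟨by simpa using hb, ?_⟩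
      rw [key hb, insMin_symm_succ]
      exact ⟨by simpa using h1, (exists_between_insMin ..).2 h2⟩

lemma exists_between_zero_one {M : ℕ} (σ : Perm (Fin (M + 2))) (i j : Fin (M + 2)) :
    (∃ q, i < q ∧ q < j ∧ 0 + 1 < (σ q : ℕ)) →
      (i : ℕ) + 1 < j := by
  rintro ⟨q, h1, h2, _⟩
  simp only [Fin.lt_def] at h1 h2
  omega

/-- Every other value exceeds `1`, so any position strictly between those of `0` and `1` separates the pair `(0, 1)`. -/
lemma one_lt_apply {M : ℕ} {σ : Perm (Fin (M + 2))} {q : Fin (M + 2)}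
    (h0 : q ≠ σ.symm 0) (h1 : q ≠ σ.symm 1) : 1 < (σ q : ℕ) := by
  have h0' : (σ q : ℕ) ≠ 0 := fun h => h0 ((eq_symm_apply σ).2 (Fin.ext h))
  have h1' : (σ q : ℕ) ≠ 1 := fun h => h1 ((eq_symm_apply σ).2 (Fin.ext h))
  omega

lemma kind_false_zero {M : ℕ} (σ : Perm (Fin (M + 2))) :
    Kind σ false 0 ↔ (σ.symm 0 : ℕ) + 1 < σ.symm 1 := by
  constructor
  · rintro ⟨_, _, h⟩
    exact exists_between_zero_one σ _ _ h
  · intro h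
    refine ⟨by simp, ?_, ⟨(σ.symm 0 : ℕ) + 1, by omega⟩, ?_, ?_, ?_⟩
    · change σ.symm 0 < σ.symm 1
      simp only [Fin.lt_def]; omega
    · simp [Fin.lt_def]
    · exact h
    · exact one_lt_apply (by simp [Fin.ext_iff]) (by simp only [Ne, Fin.ext_iff]; omega)

lemma kind_true_zero {M : ℕ} (σ : Perm (Fin (M + 2))) :
    Kind σ true 0 ↔ (σ.symm 1 : ℕ) + 1 < σ.symm 0 := by
  constructor
  · rintro ⟨_, _, h⟩
    exact exists_between_zero_one σ _ _ h
  · intro h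
    refine ⟨by simp, ?_, ⟨(σ.symm 1 : ℕ) + 1, by omega⟩, ?_, ?_, ?_⟩
    · change σ.symm 1 < σ.symm 0
      simp only [Fin.lt_def]; omega
    · change σ.symm 1 < _
      simp [Fin.lt_def]
    · exact h
    · exact one_lt_apply (by simp only [Ne, Fin.ext_iff]; omega) (by simp [Fin.ext_iff])

lemma insMin_symm_one {M : ℕ} (p : Fin (M + 2)) (τ : Perm (Fin (M + 1))) :
    (((insMin p τ).symm 1 : Fin (M + 2)) : ℕ) =
      if (τ.symm 0 : ℕ) < p then (τ.symm 0 : ℕ) else (τ.symm 0 : ℕ) + 1 := by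
  have : (insMin p τ).symm 1 = p.succAbove (τ.symm 0) := insMin_symm_succ p τ 0
  rw [this, Fin.succAbove]
  simp only [Fin.lt_def, Fin.val_castSucc]
  split_ifs <;> simp

/-! ### The recursion for chain lengths -/

lemma hasChain_insMin_of {N : ℕ} (p : Fin (N + 1)) {τ : Perm (Fin N)} {b : Bool} {t : ℕ}
    (h : HasChain τ b t) : HasChain (insMin p τ) b t := by
  obtain ⟨f, hf⟩ := h
  rw [altChain_iff] at hf
  refine ⟨fun i => (f i).succ, (altChain_iff ..).2 ⟨fun i j hij => ?_, fun j => ?_⟩⟩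
  · simpa using hf.1 hij
  · exact (kind_insMin_succ ..).2 (hf.2 j)

/-- A chain that does not use the pair of lowest values restricts to the smaller permutation. -/
lemma hasChain_of_ne_zero {N : ℕ} {p : Fin (N + 1)} {τ : Perm (Fin N)} {b : Bool} {t : ℕ}
    {f : Fin t → Fin (N + 1)} (hf : AltChain (insMin p τ) b f) (h0 : ∀ j, f j ≠ 0) :
    HasChain τ b t := by
  rw [altChain_iff] at hf
  refine ⟨fun i => (f i).pred (h0 i), (altChain_iff ..).2 ⟨fun i j hij => ?_, fun j => ?_⟩⟩
  · simpa using hf.1 hij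
  · rw [← kind_insMin_succ p, Fin.succ_pred]
    exact hf.2 j

/-- Chains of orientation `b` are unaffected unless the lowest pair has orientation `b`. -/
lemma hasChain_insMin_iff {N : ℕ} {p : Fin (N + 1)} {τ : Perm (Fin N)} {b : Bool} {t : ℕ}
    (h0 : ¬ Kind (insMin p τ) b 0) : HasChain (insMin p τ) b t ↔ HasChain τ b t := by
  refine ⟨?_, hasChain_insMin_of p⟩
  rintro ⟨f, hf⟩
  have hf' := (altChain_iff ..).1 hf
  refine hasChain_of_ne_zero hf fun j hj => ?_
  -- Only the first term of a strictly increasing sequence can be `0`.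
  have hj0 : (j : ℕ) = 0 := by
    by_contra hne
    have := hf'.1 (show (⟨0, by omega⟩ : Fin t) < j from Fin.lt_def.2 (by simp; omega))
    rw [hj] at this
    simp at this
  have := hf'.2 j
  rw [hj, hj0] at this
  exact h0 (by simpa using this)

lemma altLen_congr {n m : ℕ} {σ : Perm (Fin n)} {τ : Perm (Fin m)} {b c : Bool}
    (h : ∀ t, HasChain σ b t ↔ HasChain τ c t) : altLen b σ = altLen c τ := by
  unfold altLen
  simp only [h]

lemma altLen_insMin_of_not_kind {N : ℕ} {p : Fin (N + 1)} {τ : Perm (Fin N)} {b : Bool}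
    (h0 : ¬ Kind (insMin p τ) b 0) : altLen b (insMin p τ) = altLen b τ :=
  altLen_congr fun _ => hasChain_insMin_iff h0

lemma altLen_insMin_other {N : ℕ} {p : Fin (N + 1)} {τ : Perm (Fin N)} {b : Bool}
    (h0 : Kind (insMin p τ) b 0) : altLen (!b) (insMin p τ) = altLen (!b) τ :=
  altLen_insMin_of_not_kind h0.not_other

lemma kind_shift (b : Bool) (j : ℕ) :
    (if (j + 1) % 2 = 0 then b else !b) = (if j % 2 = 0 then !b else !!b) := by
  rcases Nat.mod_two_eq_zero_or_one j with h | h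
  · rw [if_neg (by omega), if_pos h]
  · rw [if_pos (by omega), if_neg (by omega), Bool.not_not]

lemma altLen_insMin_same {N : ℕ} {p : Fin (N + 1)} {τ : Perm (Fin N)} {b : Bool}
    (h0 : Kind (insMin p τ) b 0) : altLen b (insMin p τ) = altLen (!b) τ + 1 := by
  have key : ∀ t, HasChain (insMin p τ) b (t + 1) ↔ HasChain τ (!b) t := by
    intro t
    constructor
    · rintro ⟨f, hf⟩
      have hf' := (altChain_iff ..).1 hf
      refine hasChain_of_ne_zero (p := p) (f := fun j => f j.succ)
        ((altChain_iff ..).2 ⟨fun i j hij => hf'.1 (by simpa using hij), fun j => ?_⟩) ?_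
      · have := hf'.2 j.succ
        rwa [Fin.val_succ, kind_shift] at this
      · intro j hj
        have := hf'.1 (Fin.succ_pos j)
        rw [hj] at this
        simp at this
    · rintro ⟨f, hf⟩
      have hf' := (altChain_iff ..).1 hf
      refine ⟨Fin.cons 0 (fun i => (f i).succ), (altChain_iff ..).2 ⟨?_, fun j => ?_⟩⟩
      · intro i j hij
        induction j using Fin.cases with
        | zero => simp at hij
        | succ j =>
          induction i using Fin.cases with
          | zero => simp
          | succ i => simpa using hf'.1 (by simpa using hij)
      · induction j using Fin.cases with
        | zero => simpa using h0
        | succ j =>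
          rw [Fin.val_succ, kind_shift, Fin.cons_succ, kind_insMin_succ]
          exact hf'.2 j
  apply le_antisymm
  · by_contra! hlt
    have h1 := (key _).1 (le_altLen_iff.1 (Nat.succ_le_of_lt hlt))
    have h2 := le_altLen_iff.2 h1
    omega
  · exact le_altLen_iff.2 ((key _).2 (le_altLen_iff.1 le_rfl))

/-! ### Counting -/

lemma altLen_fin_one (σ : Perm (Fin 1)) (b : Bool) : altLen b σ = 0 := by
  by_contra h
  obtain ⟨f, hf⟩ := le_altLen_iff.1 (Nat.one_le_iff_ne_zero.2 h)
  have := ((altChain_iff ..).1 hf).2 0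
  unfold Kind at this
  split_ifs at this <;> obtain ⟨hb, -⟩ := this <;> omega

/-- If the minimum is in one of the last two positions, then there is no separated pair or the
permutation is down-oriented.  In the inductive step, `(0, 1)` cannot be an up pair for lack of
room; if it is not separated, then `1` is adjacent to `0`, and so in one of the last two positions
once `0` is deleted. -/
lemma last_two_positions (M : ℕ) (σ : Perm (Fin (M + 1))) (h : M ≤ (σ.symm 0 : ℕ) + 1) :
    altLen false σ < altLen true σ ∨ (altLen false σ = 0 ∧ altLen true σ = 0) := by
  induction M with
  | zero => exact .inr ⟨altLen_fin_one _ _, altLen_fin_one _ _⟩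
  | succ M ih =>
    obtain ⟨τ, hτ⟩ := exists_insMin σ
    have hU := kind_false_zero σ
    have hD := kind_true_zero σ
    have h1 := insMin_symm_one (σ.symm 0) τ
    rw [hτ] at h1
    have hlt := (σ.symm 1).isLt
    have hnU : ¬ Kind σ false 0 := by rw [hU]; omega
    by_cases hk : Kind σ true 0
    · rw [← hτ] at hk
      have e1 := altLen_insMin_same hk
      have e2 := altLen_insMin_other hk
      rw [hτ] at e1 e2
      simp only [Bool.not_true] at e1 e2
      omega
    · have e1 := altLen_insMin_of_not_kind (hτ.symm ▸ hk)
      have e2 := altLen_insMin_of_not_kind (hτ.symm ▸ hnU)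
      rw [hτ] at e1 e2
      rw [e1, e2]
      apply ih
      rw [hD] at hk
      split_ifs at h1 <;> omega

lemma onePos_succ {N : ℕ} (σ : Perm (Fin (N + 1))) (k : ℕ) :
    onePos σ k ↔ (σ.symm 0 : ℕ) + 1 = k :=
  ⟨fun h => h (Nat.succ_pos N), fun h _ => h⟩

/-- The case analysis on the position of the entry `2`; here the entry `1` is inserted in the
third position from the right. -/
lemma insMin_cases {M t : ℕ} (ht : 1 ≤ t) (p : Fin (M + 3)) (hp : (p : ℕ) = M)
    (τ : Perm (Fin (M + 2))) :
    (UpOriented (insMin p τ) ∧ revTier (insMin p τ) = t) ↔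
      ((DownOriented τ ∧ revTier τ = t ∧ onePos τ (M + 2)) ∨
        (UpOriented τ ∧ revTier τ = t ∧ onePos τ M)) := by
  simp only [upOriented_iff, downOriented_iff, revTier_eq, onePos_succ]
  have hU := kind_false_zero (insMin p τ)
  have hD := kind_true_zero (insMin p τ)
  have h1 := insMin_symm_one p τ
  have hL := last_two_positions _ τ
  have hlt := (τ.symm 0).isLt
  rw [h1, insMin_symm_zero] at hU hD
  by_cases hkU : Kind (insMin p τ) false 0
  · have e1 := altLen_insMin_same hkU
    have e2 := altLen_insMin_other hkU
    simp only [Bool.not_false] at e1 e2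
    rw [hU] at hkU
    split_ifs at hkU <;> omega
  by_cases hkD : Kind (insMin p τ) true 0
  · have e1 := altLen_insMin_same hkD
    have e2 := altLen_insMin_other hkD
    simp only [Bool.not_true] at e1 e2
    rw [hD] at hkD
    split_ifs at hkD <;> omega
  · rw [altLen_insMin_of_not_kind hkU, altLen_insMin_of_not_kind hkD]
    rw [hU] at hkU
    rw [hD] at hkD
    split_ifs at hkU hkD <;> omega

/-- The permutations with minimum at `p` correspond to arbitrary permutations one shorter. -/
lemma card_insMin {N : ℕ} (p : Fin (N + 1)) (P : Perm (Fin (N + 1)) → Prop) :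
    Nat.card {σ // P σ ∧ σ.symm 0 = p} = Nat.card {τ // P (insMin p τ)} := by
  refine (Nat.card_eq_of_bijective
    (fun τ : {τ // P (insMin p τ)} =>
      (⟨insMin p τ.1, τ.2, insMin_symm_zero p τ.1⟩ : {σ // P σ ∧ σ.symm 0 = p})) ⟨?_, ?_⟩).symm
  · rintro ⟨τ, _⟩ ⟨τ', _⟩ h
    simp only [Subtype.mk.injEq] at h ⊢
    exact insMin_injective p h
  · rintro ⟨σ, hP, rfl⟩
    obtain ⟨τ, hτ⟩ := exists_insMin σ
    exact ⟨⟨τ, by rwa [hτ]⟩, by simpa using hτ⟩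

lemma muU_rec (M t : ℕ) (ht : 1 ≤ t) :
    muU (M + 3) t (M + 1) = muD (M + 2) t (M + 2) + muU (M + 2) t M := by
  classical
  let p : Fin (M + 3) := ⟨M, by omega⟩
  have e : muU (M + 3) t (M + 1) =
      Nat.card {σ : Perm (Fin (M + 3)) // (UpOriented σ ∧ revTier σ = t) ∧ σ.symm 0 = p} := by
    unfold muU
    refine Nat.card_congr (Equiv.subtypeEquivRight fun σ => ?_)
    rw [onePos_succ, and_assoc, Fin.ext_iff]
    simp [p]
  rw [e, card_insMin p fun σ => UpOriented σ ∧ revTier σ = t,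
    Nat.card_congr (Equiv.subtypeEquivRight (insMin_cases ht p rfl))]
  unfold muD muU
  rw [← Nat.card_sum]
  refine Nat.card_congr (subtypeOrEquiv _ _ ?_)
  rw [Pi.disjoint_iff]
  intro τ
  rw [Prop.disjoint_iff]
  simp only [onePos_succ, not_and]
  omega

end RevTierAux

open RevTierAux in
/-- `μ_U(n,t,n-2)` equals the number of permutations of length at most
`n-1`, rev-tier `t`, with entry `1` in the final position. -/
theorem muU_penultimate (n t : ℕ) (ht : 1 ≤ t) :
    muU n t (n - 2) = ∑ m ∈ Finset.Icc 1 (n - 1), muD m t m := by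
  -- For `n ≤ 2` the prescribed position is `0`, so that no permutation qualifies; for `n = 0`
  -- the position is unconstrained, but there is no separated pair.
  have small : ∀ k, muU (k + 1) t 0 = 0 := fun k => by
    unfold muU
    have : IsEmpty {σ : Equiv.Perm (Fin (k + 1)) //
        UpOriented σ ∧ revTier σ = t ∧ onePos σ 0} :=
      ⟨fun ⟨σ, _, _, h⟩ => by rw [onePos_succ] at h; omega⟩
    exact Nat.card_of_isEmpty
  match n with
  | 0 =>
    have : IsEmpty {σ : Equiv.Perm (Fin 0) // UpOriented σ ∧ revTier σ = t ∧ onePos σ 0} :=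
      ⟨fun ⟨σ, h, _, _⟩ => by
        rw [upOriented_iff] at h
        have := (le_altLen_iff.1 (le_refl (altLen false σ))).le
        omega⟩
    simp [muU]
  | 1 => simpa using small 0
  | k + 2 =>
    induction k with
    | zero =>
      have : IsEmpty {σ : Equiv.Perm (Fin 1) // DownOriented σ ∧ revTier σ = t ∧ onePos σ 1} :=
        ⟨fun ⟨σ, _, h, _⟩ => by rw [revTier_eq, altLen_fin_one] at h; omega⟩
      have h1 : muD 1 t 1 = 0 := Nat.card_of_isEmpty
      simpa [h1] using small 1
    | succ M ih =>
      have ih' : muU (M + 2) t M = ∑ m ∈ Finset.Icc 1 (M + 1), muD m t m := ih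
      change muU (M + 3) t (M + 1) = ∑ m ∈ Finset.Icc 1 (M + 2), muD m t m
      rw [muU_rec M t ht, Finset.sum_Icc_succ_top (by omega), ih', add_comm]
end
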